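/- arXiv:1309.1986 — 3 statements merged into one kernel-verified Lean document; each statement's English description precedes it below -/
import Mathlib

section
/- Let P be a Poisson algebra over a field k, E a vector space, and π : E → P a surjective linear map with V = Ker(π). Then for any Poisson algebra structure (·_E, [-,-]_E) on E such that π : (E, ·_E, [-,-]_E) → P is a morphism of Poisson algebras, there exists a crossed system Ω(P,V) of P by V and an isomorphism of Poisson algebras φ : P♯V → (E, ·_E, [-,-]_E) that stabilizes V (φ restricted to {0}×V ≅ V is the identity of V) and co-stabilizes P (π ∘ φ equals the canonical projection P×V → P). In particular, any Poisson algebra extension of P by V is cohomologous to a crossed product extension. -/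
/-!
Over a field the surjection `π` has a linear section `s`, and `ρ e = e - s (π e)` is a linear
retraction of `E` onto `V = ker π`. Hence `φ (p, x) = s p + x` is a linear isomorphism
`P × V ≃ E` with inverse `e ↦ (π e, ρ e)`. The seven maps of the crossed system are obtained by
applying `ρ` to the products and brackets in `E` of elements of the form `s p` and `x`. Expanding
by bilinearity (and skew-symmetry, for the mixed bracket term `[x, s q]`) shows that `φ` intertwines
the operations of `P ♯ V` with those of `E`. The Poisson axioms on `P ♯ V` then follow by transport
along `φ`.
-/

universe u

section Defs

variable (k : Type u) [Field k]

/-- A map in two variables is `k`-bilinear. -/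
def IsBilin {A B C : Type u} [AddCommGroup A] [Module k A] [AddCommGroup B] [Module k B]
    [AddCommGroup C] [Module k C] (f : A → B → C) : Prop :=
  (∀ a a' b, f (a + a') b = f a b + f a' b) ∧
  (∀ (c : k) (a b), f (c • a) b = c • f a b) ∧
  (∀ a b b', f a (b + b') = f a b + f a b') ∧
  (∀ (c : k) (a b), f a (c • b) = c • f a b)

/-- `(A, mul, br)` is a (not necessarily commutative or unital) Poisson algebra over `k`:
`mul` is a bilinear associative multiplication, `br` is a Lie bracket and the
Leibniz law `[ab, c] = [a,c]b + a[b,c]` holds. -/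
structure IsPoisson {A : Type u} [AddCommGroup A] [Module k A]
    (mul br : A → A → A) : Prop where
  mul_bilin : IsBilin k mul
  br_bilin : IsBilin k br
  mul_assoc : ∀ a b c, mul (mul a b) c = mul a (mul b c)
  br_alt : ∀ a, br a a = 0
  jacobi : ∀ a b c, br (br a b) c + br (br b c) a + br (br c a) b = 0
  leibniz : ∀ a b c, br (mul a b) c = mul (br a c) b + mul a (br b c)

variable (P V : Type u) [AddCommGroup P] [Module k P] [AddCommGroup V] [Module k V]

/-- A pre-crossed datum `Ω(P,V) = (⇀, ◁, ϑ, ·_V, ▷, f, [-,-]_V)` of a Poisson algebra `P`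
by a vector space `V`:  seven bilinear maps.  Here `hl = ⇀`, `hr = ◁`, `theta = ϑ`,
`mulV = ·_V`, `lact = ▷`, `cf = f` and `brV = [-,-]_V`. -/
structure PreCrossedDatum where
  hl : P → V → V
  hr : V → P → V
  theta : P → P → V
  mulV : V → V → V
  lact : P → V → V
  cf : P → P → V
  brV : V → V → V
  hl_bilin : IsBilin k hl
  hr_bilin : IsBilin k hr
  theta_bilin : IsBilin k theta
  mulV_bilin : IsBilin k mulV
  lact_bilin : IsBilin k lact
  cf_bilin : IsBilin k cf
  brV_bilin : IsBilin k brV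

variable {k P V}

/-- The multiplication `(p,x) ⋆ (q,y) = (pq, ϑ(p,q) + p⇀y + x◁q + x·y)` of `P ♯ V`. -/
def sharpMul (mulP : P → P → P) (Om : PreCrossedDatum k P V) :
    P × V → P × V → P × V :=
  fun a b => (mulP a.1 b.1,
    Om.theta a.1 b.1 + Om.hl a.1 b.2 + Om.hr a.2 b.1 + Om.mulV a.2 b.2)

/-- The bracket `{(p,x), (q,y)} = ([p,q], f(p,q) + p▷y − q▷x + [x,y]_V)` of `P ♯ V`. -/
def sharpBr (brP : P → P → P) (Om : PreCrossedDatum k P V) :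
    P × V → P × V → P × V :=
  fun a b => (brP a.1 b.1,
    Om.cf a.1 b.1 + Om.lact a.1 b.2 - Om.lact b.1 a.2 + Om.brV a.2 b.2)

/-- A pre-crossed datum is a crossed system when `P ♯ V` is a Poisson algebra. -/
def IsCrossedSystem (mulP brP : P → P → P) (Om : PreCrossedDatum k P V) : Prop :=
  IsPoisson k (sharpMul mulP Om) (sharpBr brP Om)

end Defs

/-- Post- and precomposing a bilinear map with linear maps gives a bilinear map. -/
lemma IsBilin.comp_linear {k A B C M N : Type u} [Field k] [AddCommGroup A] [Module k A]
    [AddCommGroup B] [Module k B] [AddCommGroup C] [Module k C] [AddCommGroup M] [Module k M]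
    [AddCommGroup N] [Module k N] {m : M → M → N} (hm : IsBilin k m)
    (f : A →ₗ[k] M) (g : B →ₗ[k] M) (h : N →ₗ[k] C) :
    IsBilin k (fun a b => h (m (f a) (g b))) := by
  obtain ⟨h1, h2, h3, h4⟩ := hm
  exact ⟨by simp [h1], by simp [h2], by simp [h3], by simp [h4]⟩

/-- A Poisson algebra structure transfers along a linear isomorphism that intertwines the
operations. -/
lemma IsPoisson.of_equiv {k A B : Type u} [Field k] [AddCommGroup A] [Module k A]
    [AddCommGroup B] [Module k B] {mulA brA : A → A → A} {mulB brB : B → B → B}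
    (hB : IsPoisson k mulB brB) (φ : A ≃ₗ[k] B)
    (hmul : ∀ a b, φ (mulA a b) = mulB (φ a) (φ b))
    (hbr : ∀ a b, φ (brA a b) = brB (φ a) (φ b)) : IsPoisson k mulA brA := by
  have em : mulA = fun a b => φ.symm.toLinearMap (mulB (φ.toLinearMap a) (φ.toLinearMap b)) := by
    funext a b; simp [← hmul]
  have eb : brA = fun a b => φ.symm.toLinearMap (brB (φ.toLinearMap a) (φ.toLinearMap b)) := by
    funext a b; simp [← hbr]
  refine ⟨em ▸ hB.mul_bilin.comp_linear _ _ _, eb ▸ hB.br_bilin.comp_linear _ _ _, ?_, ?_, ?_, ?_⟩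
  · intro a b c; apply φ.injective; simp only [hmul, hB.mul_assoc]
  · intro a; apply φ.injective; simp only [hbr, hB.br_alt, map_zero]
  · intro a b c; apply φ.injective; simp only [hbr, map_add, hB.jacobi, map_zero]
  · intro a b c; apply φ.injective; simp only [hbr, hmul, map_add, hB.leibniz]

lemma IsPoisson.br_skew {k A : Type u} [Field k] [AddCommGroup A] [Module k A]
    {mul br : A → A → A} (h : IsPoisson k mul br) (a b : A) : br a b = -br b a := by
  have := h.br_alt (a + b)
  rw [h.br_bilin.1, h.br_bilin.2.2.1, h.br_bilin.2.2.1, h.br_alt, h.br_alt] at this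
  rw [zero_add, add_zero] at this
  exact eq_neg_of_add_eq_zero_left this

/-- **Proposition 2.5.** Let `P` be a Poisson algebra, `E` a vector space and `π : E → P`
a surjective linear map with `V = ker π`.  Any Poisson algebra structure on `E` such that
`π` becomes a Poisson algebra morphism is isomorphic to a crossed product `P ♯ V`, via an
isomorphism that stabilizes `V` and co-stabilizes `P`. -/
theorem statement1 {k P E : Type u} [Field k] [AddCommGroup P] [Module k P]
    [AddCommGroup E] [Module k E] (mulP brP : P → P → P) (hP : IsPoisson k mulP brP)
    (π : E →ₗ[k] P) (hπ : Function.Surjective π)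
    (mulE brE : E → E → E) (hE : IsPoisson k mulE brE)
    (hmul : ∀ a b, π (mulE a b) = mulP (π a) (π b))
    (hbr : ∀ a b, π (brE a b) = brP (π a) (π b)) :
    ∃ Om : PreCrossedDatum k P ↥(LinearMap.ker π),
      IsCrossedSystem mulP brP Om ∧
      ∃ φ : (P × ↥(LinearMap.ker π)) ≃ₗ[k] E,
        (∀ a b, φ (sharpMul mulP Om a b) = mulE (φ a) (φ b)) ∧
        (∀ a b, φ (sharpBr brP Om a b) = brE (φ a) (φ b)) ∧
        (∀ v : ↥(LinearMap.ker π), φ (0, v) = (v : E)) ∧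
        (∀ a : P × ↥(LinearMap.ker π), π (φ a) = a.1) := by
  obtain ⟨s, hs⟩ := π.exists_rightInverse_of_surjective (LinearMap.range_eq_top.2 hπ)
  have hs' : ∀ p, π (s p) = p := fun p => LinearMap.congr_fun hs p
  -- The retraction `e ↦ e - s (π e)` of `E` onto `ker π`.
  let ρ : E →ₗ[k] LinearMap.ker π :=
    LinearMap.codRestrict (LinearMap.ker π) (LinearMap.id - s ∘ₗ π) (fun e => by simp [hs'])
  have hρ : ∀ e, (ρ e : E) = e - s (π e) := fun e => rfl
  let ι : LinearMap.ker π →ₗ[k] E := (LinearMap.ker π).subtype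
  have hι : ∀ v : LinearMap.ker π, ι v = (v : E) := fun v => rfl
  have hπι : ∀ v : LinearMap.ker π, π v = 0 := fun v => v.2
  let Om : PreCrossedDatum k P (LinearMap.ker π) :=
    { hl := fun p x => ρ (mulE (s p) (ι x))
      hr := fun x p => ρ (mulE (ι x) (s p))
      theta := fun p q => ρ (mulE (s p) (s q))
      mulV := fun x y => ρ (mulE (ι x) (ι y))
      lact := fun p x => ρ (brE (s p) (ι x))
      cf := fun p q => ρ (brE (s p) (s q))
      brV := fun x y => ρ (brE (ι x) (ι y))
      hl_bilin := hE.mul_bilin.comp_linear _ _ _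
      hr_bilin := hE.mul_bilin.comp_linear _ _ _
      theta_bilin := hE.mul_bilin.comp_linear _ _ _
      mulV_bilin := hE.mul_bilin.comp_linear _ _ _
      lact_bilin := hE.br_bilin.comp_linear _ _ _
      cf_bilin := hE.br_bilin.comp_linear _ _ _
      brV_bilin := hE.br_bilin.comp_linear _ _ _ }
  let φ : (P × LinearMap.ker π) ≃ₗ[k] E :=
    LinearEquiv.ofLinearMap (s.coprod ι) (π.prod ρ)
      (by ext e; simp [hι, hρ])
      (by
        apply LinearMap.ext
        rintro ⟨p, x⟩
        refine Prod.ext ?_ (Subtype.ext ?_) <;> simp [hι, hρ, hs', hπι])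
  have hφ : ∀ a, φ a = s a.1 + ι a.2 := fun a => rfl
  have hπφ : ∀ a, π (φ a) = a.1 := fun a => by simp [hφ, hι, hs', hπι]
  have hφsymm : ∀ e, φ.symm e = (π e, ρ e) := fun e => rfl
  have hφmul : ∀ a b, φ (sharpMul mulP Om a b) = mulE (φ a) (φ b) := by
    intro a b
    rw [← LinearEquiv.eq_symm_apply, hφsymm, hmul, hπφ, hπφ, hφ, hφ, hE.mul_bilin.1,
      hE.mul_bilin.2.2.1, hE.mul_bilin.2.2.1]
    simp only [map_add, sharpMul, Om, add_assoc]
  have hφbr : ∀ a b, φ (sharpBr brP Om a b) = brE (φ a) (φ b) := by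
    intro a b
    rw [← LinearEquiv.eq_symm_apply, hφsymm, hbr, hπφ, hπφ, hφ, hφ, hE.br_bilin.1,
      hE.br_bilin.2.2.1, hE.br_bilin.2.2.1, hE.br_skew (ι a.2) (s b.1)]
    simp only [map_add, map_neg, sharpBr, Om, add_assoc, sub_eq_add_neg]
  exact ⟨Om, hE.of_equiv φ hφmul hφbr, φ, hφmul, hφbr, fun v => by simp [hφ, hι], hπφ⟩
end

section
/- Let P be a Poisson algebra over a field k, V a vector space, and let Ω(P,V) = (⇀, ◁, ϑ, ·_V, ▷, f, [-,-]_V) and Ω'(P,V) = (⇀', ◁', ϑ', ·'_V, ▷', f', [-,-]'_V) be two crossed systems of P by V, with crossed products P♯V and P♯'V. Then the assignment r ↦ ψ_r, where ψ_r(p,x) = (p, r(p)+x), is a bijection between the set of linear maps r : P → V satisfying the conditions (M1) x·_V y = x·'_V y; (M2) x◁p = x◁'p + x·'_V r(p); (M3) p⇀x = p⇀'x + r(p)·'_V x; (M4) ϑ(p,q) = ϑ'(p,q) + p⇀'r(q) + r(p)◁'q − r(pq) + r(p)·'_V r(q); (M5) [x,y]_V = [x,y]'_V; (M6) p▷x =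 p▷'x + [r(p),x]'_V; (M7) f(p,q) = f'(p,q) + p▷'r(q) − q▷'r(p) + [r(p),r(q)]'_V − r([p,q]) (for all p,q ∈ P, x,y ∈ V), and the set of Poisson algebra morphisms ψ : P♯V → P♯'V that stabilize V and co-stabilize P. Moreover every such ψ_r is an isomorphism, with inverse ψ_{−r}. -/
/-!
A linear endomorphism of `P × V` that fixes `V` pointwise and commutes with the projection to `P`
has the form `ψ_r (p, x) = (p, r p + x)` for the linear map `r p = (ψ (p, 0)).2`, so the whole
content is that `ψ_r` preserves the product iff (M1)-(M4) hold (`shearMap_mul_iff`) and preserves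
the bracket iff (M5)-(M7) hold (`shearMap_br_iff`). The forward directions evaluate on pairs of
elements of `P × 0` and `0 × V`; the backward directions expand by bilinearity. The bracket case
also uses that `[-,-]'_V` is antisymmetric, which it inherits from the bracket of `P ♯' V`.
-/

universe u

section Helpers

variable {k P V : Type u} [Field k] [AddCommGroup P] [Module k P] [AddCommGroup V] [Module k V]

theorem IsBilin.zero_left {A B C : Type u} [AddCommGroup A] [Module k A] [AddCommGroup B]
    [Module k B] [AddCommGroup C] [Module k C] {f : A → B → C} (h : IsBilin k f) (b : B) :
    f 0 b = 0 := by
  simpa using h.2.1 0 0 b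

theorem IsBilin.zero_right {A B C : Type u} [AddCommGroup A] [Module k A] [AddCommGroup B]
    [Module k B] [AddCommGroup C] [Module k C] {f : A → B → C} (h : IsBilin k f) (a : A) :
    f a 0 = 0 := by
  simpa using h.2.2.2 0 a 0

/-- The shear `ψ_r (p, x) = (p, r p + x)`, as a linear map. -/
def shearMap (r : P →ₗ[k] V) : (P × V) →ₗ[k] P × V :=
  (LinearMap.fst k P V).prod (r.comp (LinearMap.fst k P V) + LinearMap.snd k P V)

@[simp]
theorem shearMap_apply (r : P →ₗ[k] V) (a : P × V) : shearMap r a = (a.1, r a.1 + a.2) := rfl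

theorem brV_antisymm {mulP brP : P → P → P} {Om : PreCrossedDatum k P V}
    (h : IsCrossedSystem mulP brP Om) (x y : V) : Om.brV x y = -Om.brV y x := by
  have alt : ∀ z, Om.brV z z = 0 := fun z => by
    have := congrArg Prod.snd (h.br_alt (0, z))
    simpa [sharpBr, Om.cf_bilin.zero_left] using this
  have hxy := alt (x + y)
  rw [Om.brV_bilin.1, Om.brV_bilin.2.2.1, Om.brV_bilin.2.2.1, alt, alt] at hxy
  rw [eq_neg_iff_add_eq_zero]
  simpa using hxy

/-- `ψ_r` is multiplicative exactly when (M1)-(M4) hold. -/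
theorem shearMap_mul_iff {mulP : P → P → P} (hmul : IsBilin k mulP)
    (Om Om' : PreCrossedDatum k P V) (r : P →ₗ[k] V) :
    (∀ a b, shearMap r (sharpMul mulP Om a b) =
        sharpMul mulP Om' (shearMap r a) (shearMap r b)) ↔
      (∀ x y, Om.mulV x y = Om'.mulV x y) ∧
      (∀ (p : P) (x : V), Om.hr x p = Om'.hr x p + Om'.mulV x (r p)) ∧
      (∀ (p : P) (x : V), Om.hl p x = Om'.hl p x + Om'.mulV (r p) x) ∧
      (∀ p q, Om.theta p q = Om'.theta p q + Om'.hl p (r q) + Om'.hr (r p) q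
        - r (mulP p q) + Om'.mulV (r p) (r q)) := by
  constructor
  · intro h
    have h2 : ∀ p x q y, _ := fun p x q y => congrArg Prod.snd (h (p, x) (q, y))
    simp only [shearMap_apply, sharpMul] at h2
    refine ⟨fun x y => ?_, fun p x => ?_, fun p x => ?_, fun p q => ?_⟩
    · simpa [hmul.zero_left, Om.theta_bilin.zero_left, Om'.theta_bilin.zero_left,
        Om.hl_bilin.zero_left, Om'.hl_bilin.zero_left, Om.hr_bilin.zero_right,
        Om'.hr_bilin.zero_right] using h2 0 x 0 y
    · simpa [hmul.zero_left, Om.theta_bilin.zero_left, Om'.theta_bilin.zero_left,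
        Om.hl_bilin.zero_left, Om'.hl_bilin.zero_left, Om.mulV_bilin.zero_right]
        using h2 0 x p 0
    · simpa [hmul.zero_right, Om.theta_bilin.zero_right, Om'.theta_bilin.zero_right,
        Om.hr_bilin.zero_right, Om'.hr_bilin.zero_right, Om.mulV_bilin.zero_left]
        using h2 p 0 0 x
    · have := h2 p 0 q 0
      simp only [Om.hl_bilin.zero_right, Om.hr_bilin.zero_left, Om.mulV_bilin.zero_left,
        add_zero] at this
      rw [eq_sub_of_add_eq' this]
      abel
  · rintro ⟨h1, h2, h3, h4⟩ ⟨p, x⟩ ⟨q, y⟩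
    refine Prod.ext rfl ?_
    simp only [shearMap_apply, sharpMul, Om'.hl_bilin.2.2.1, Om'.hr_bilin.1, Om'.mulV_bilin.1,
      Om'.mulV_bilin.2.2.1]
    rw [h1, h2, h3, h4]
    abel

/-- `ψ_r` preserves the brackets exactly when (M5)-(M7) hold. -/
theorem shearMap_br_iff {mulP brP : P → P → P} (hbr : IsBilin k brP)
    (Om : PreCrossedDatum k P V) {Om' : PreCrossedDatum k P V}
    (hOm' : IsCrossedSystem mulP brP Om') (r : P →ₗ[k] V) :
    (∀ a b, shearMap r (sharpBr brP Om a b) =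
        sharpBr brP Om' (shearMap r a) (shearMap r b)) ↔
      (∀ x y, Om.brV x y = Om'.brV x y) ∧
      (∀ (p : P) (x : V), Om.lact p x = Om'.lact p x + Om'.brV (r p) x) ∧
      (∀ p q, Om.cf p q = Om'.cf p q + Om'.lact p (r q) - Om'.lact q (r p)
        + Om'.brV (r p) (r q) - r (brP p q)) := by
  constructor
  · intro h
    have h2 : ∀ p x q y, _ := fun p x q y => congrArg Prod.snd (h (p, x) (q, y))
    simp only [shearMap_apply, sharpBr] at h2
    refine ⟨fun x y => ?_, fun p x => ?_, fun p q => ?_⟩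
    · simpa [hbr.zero_left, Om.cf_bilin.zero_left, Om'.cf_bilin.zero_left,
        Om.lact_bilin.zero_left, Om'.lact_bilin.zero_left] using h2 0 x 0 y
    · simpa [hbr.zero_right, Om.cf_bilin.zero_right, Om'.cf_bilin.zero_right,
        Om.lact_bilin.zero_left, Om'.lact_bilin.zero_left, Om.brV_bilin.zero_left]
        using h2 p 0 0 x
    · have := h2 p 0 q 0
      simp only [Om.lact_bilin.zero_right, Om.brV_bilin.zero_left, add_zero, sub_zero] at this
      exact eq_sub_of_add_eq' this
  · rintro ⟨h5, h6, h7⟩ ⟨p, x⟩ ⟨q, y⟩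
    refine Prod.ext rfl ?_
    simp only [shearMap_apply, sharpBr, Om'.lact_bilin.2.2.1, Om'.brV_bilin.1,
      Om'.brV_bilin.2.2.1]
    rw [h5, h6, h6, h7, brV_antisymm hOm' x (r q)]
    abel

/-- A linear map fixing `V` and lying over the identity of `P` is the shear along
`p ↦ (ψ (p, 0)).2`. -/
theorem eq_shearMap {ψ : (P × V) →ₗ[k] P × V} (hV : ∀ x : V, ψ (0, x) = (0, x))
    (hP : ∀ a : P × V, (ψ a).1 = a.1) :
    shearMap ((LinearMap.snd k P V).comp (ψ.comp (LinearMap.inl k P V))) = ψ := by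
  refine LinearMap.ext fun ⟨p, x⟩ => ?_
  have hsplit : ((p, x) : P × V) = (p, 0) + (0, x) := by simp
  have : ψ (p, x) = ψ (p, 0) + (0, x) := by rw [hsplit, map_add, hV]
  rw [this]
  ext <;> simp [hP]

end Helpers

/-- **Lemma 2.8.** Let `Ω(P,V)` and `Ω'(P,V)` be two crossed systems of a Poisson algebra `P`
by a vector space `V`.  The assignment `r ↦ ψ_r`, `ψ_r(p,x) = (p, r(p) + x)`, is a bijection
between the set of linear maps `r : P → V` satisfying (M1)-(M7) and the set of Poisson algebra
morphisms `ψ : P ♯ V → P ♯' V` that stabilize `V` and co-stabilize `P`; moreover each `ψ_r`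
is an isomorphism with inverse `ψ_{-r}`. -/
theorem statement2 {k P V : Type u} [Field k] [AddCommGroup P] [Module k P]
    [AddCommGroup V] [Module k V] (mulP brP : P → P → P) (hP : IsPoisson k mulP brP)
    (Om Om' : PreCrossedDatum k P V)
    (hOm : IsCrossedSystem mulP brP Om) (hOm' : IsCrossedSystem mulP brP Om') :
    ∃ F : {r : P →ₗ[k] V //
        -- (M1)
        (∀ x y, Om.mulV x y = Om'.mulV x y) ∧
        -- (M2)
        (∀ (p : P) (x : V), Om.hr x p = Om'.hr x p + Om'.mulV x (r p)) ∧
        -- (M3)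
        (∀ (p : P) (x : V), Om.hl p x = Om'.hl p x + Om'.mulV (r p) x) ∧
        -- (M4)
        (∀ p q, Om.theta p q = Om'.theta p q + Om'.hl p (r q) + Om'.hr (r p) q
            - r (mulP p q) + Om'.mulV (r p) (r q)) ∧
        -- (M5)
        (∀ x y, Om.brV x y = Om'.brV x y) ∧
        -- (M6)
        (∀ (p : P) (x : V), Om.lact p x = Om'.lact p x + Om'.brV (r p) x) ∧
        -- (M7)
        (∀ p q, Om.cf p q = Om'.cf p q + Om'.lact p (r q) - Om'.lact q (r p)
            + Om'.brV (r p) (r q) - r (brP p q))} →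
      {ψ : (P × V) →ₗ[k] P × V //
        (∀ a b, ψ (sharpMul mulP Om a b) = sharpMul mulP Om' (ψ a) (ψ b)) ∧
        (∀ a b, ψ (sharpBr brP Om a b) = sharpBr brP Om' (ψ a) (ψ b)) ∧
        (∀ x : V, ψ (0, x) = (0, x)) ∧
        (∀ a : P × V, (ψ a).1 = a.1)},
      Function.Bijective F ∧
      (∀ r, ∀ (p : P) (x : V), (F r).1 (p, x) = (p, r.1 p + x)) ∧
      (∀ r, Function.LeftInverse (fun a : P × V => (a.1, -(r.1 a.1) + a.2)) (F r).1 ∧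
        Function.RightInverse (fun a : P × V => (a.1, -(r.1 a.1) + a.2)) (F r).1) := by
  refine ⟨fun r => ⟨shearMap r.1, ?_, ?_, fun x => by simp, fun a => rfl⟩, ⟨?_, ?_⟩,
    fun r p x => rfl, fun r => ⟨fun a => by simp, fun a => by simp⟩⟩
  · obtain ⟨r, h1, h2, h3, h4, -⟩ := r
    exact (shearMap_mul_iff hP.mul_bilin Om Om' r).2 ⟨h1, h2, h3, h4⟩
  · obtain ⟨r, -, -, -, -, h⟩ := r
    exact (shearMap_br_iff hP.br_bilin Om hOm' r).2 h
  · intro r s h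
    refine Subtype.ext (LinearMap.ext fun p => ?_)
    have := congrArg (fun ψ => (ψ.1 (p, 0)).2) h
    simpa using this
  · rintro ⟨ψ, hmul, hbr, hV, hfst⟩
    have hψ := eq_shearMap hV hfst
    rw [← hψ] at hmul hbr
    obtain ⟨h1, h2, h3, h4⟩ := (shearMap_mul_iff hP.mul_bilin Om Om' _).1 hmul
    exact ⟨⟨_, h1, h2, h3, h4, (shearMap_br_iff hP.br_bilin Om hOm' _).1 hbr⟩,
      Subtype.ext hψ⟩
end

section
/- Let P be a Poisson algebra over a field k, E a vector space, and π : E → P a surjective linear map with V = Ker(π). Then the relation ≈ of being cohomologous is an equivalence relation on the set PS(P,V) of all crossed systems of P by V, and the map sending the equivalence class of a crossed system Ω(P,V) = (⇀, ◁, ϑ, ·_V, ▷, f, [-,-]_V) to the equivalence class of the crossed product P♯V is a bijection from GPH²(P,V) := PS(P,V)/≈ onto Gext(E,P), the set of equivalence classes of Poisson algebra structures (·_E, [-,-]_E) on E making π : E → P a Poisson algebra morphism, where two such structures are identified whenever there exists a Poisson algebra isomorphism between them that stabilizes V and co-stabilizes P. -/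
/-!
Fixing a linear section `σ` of `π` identifies `E` with `P × V` through `(p, x) ↦ σ p + x`, an
isomorphism that respects the inclusion of `V` and the projection to `P` (`splitEquiv`).  Poisson
structures on `E` compatible with `π` are thereby the same as Poisson structures on `P × V`
compatible with the first projection, and every such structure is a crossed product (`exists_datum`).

A linear automorphism of `P × V` fixing `V` and commuting with the projection has the form
`(p, x) ↦ (p, r p + x)` for a linear `r : P → V`.  Expanding the condition that it is a morphism
`P ♯ V → P ♯' V` gives exactly the formulas defining cohomologous systems (`cohomologous_iff`);
the bracket formula also uses that `[-,-]_V` is antisymmetric.  So `≈` corresponds to the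
isomorphism relation on extensions, which yields both that `≈` is an equivalence relation and that
the transport map on quotients is bijective.
-/

universe u

section Cohom

variable {k P V : Type u} [Field k] [AddCommGroup P] [Module k P]
  [AddCommGroup V] [Module k V]

/-- Two crossed systems are cohomologous: `·_V = ·'_V`, `[-,-]_V = [-,-]'_V` and there exists
a linear map `r : P → V` implementing the deformation formulas. -/
def Cohomologous (mulP brP : P → P → P) (Om Om' : PreCrossedDatum k P V) : Prop :=
  Om.mulV = Om'.mulV ∧ Om.brV = Om'.brV ∧
  ∃ r : P →ₗ[k] V,
    (∀ (p : P) (x : V), Om.hl p x = Om'.hl p x + Om.mulV (r p) x) ∧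
    (∀ (p : P) (x : V), Om.hr x p = Om'.hr x p + Om.mulV x (r p)) ∧
    (∀ p q, Om.theta p q = Om'.theta p q + Om'.hl p (r q) + Om'.hr (r p) q
        - r (mulP p q) + Om.mulV (r p) (r q)) ∧
    (∀ (p : P) (x : V), Om.lact p x = Om'.lact p x + Om.brV (r p) x) ∧
    (∀ p q, Om.cf p q = Om'.cf p q + Om'.lact p (r q) - Om'.lact q (r p)
        + Om.brV (r p) (r q) - r (brP p q))

end Cohom

section Helpers

variable {k : Type u} [Field k]

namespace IsBilin

variable {A B C : Type u} [AddCommGroup A] [Module k A] [AddCommGroup B] [Module k B]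
  [AddCommGroup C] [Module k C] {f : A → B → C}

lemma zero_left_s3 (h : IsBilin k f) (b : B) : f 0 b = 0 := by
  simpa using h.2.1 0 0 b

lemma zero_right_s3 (h : IsBilin k f) (a : A) : f a 0 = 0 := by
  simpa using h.2.2.2 0 a 0

end IsBilin

/-- A bracket is antisymmetric, being alternating and biadditive. -/
lemma IsPoisson.br_swap {A : Type u} [AddCommGroup A] [Module k A] {mul br : A → A → A}
    (h : IsPoisson k mul br) (a b : A) : br a b = - br b a := by
  have h1 := h.br_alt (a + b)
  rw [h.br_bilin.1, h.br_bilin.2.2.1, h.br_bilin.2.2.1, h.br_alt, h.br_alt] at h1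
  rw [eq_neg_iff_add_eq_zero]
  simpa using h1

/-- Transport of a binary operation along a linear equivalence. -/
def conjOp {A B : Type u} [AddCommGroup A] [Module k A] [AddCommGroup B] [Module k B]
    (e : A ≃ₗ[k] B) (m : A → A → A) : B → B → B :=
  fun a b => e (m (e.symm a) (e.symm b))

lemma IsPoisson.conj {A B : Type u} [AddCommGroup A] [Module k A] [AddCommGroup B] [Module k B]
    (e : A ≃ₗ[k] B) {mul br : A → A → A} (h : IsPoisson k mul br) :
    IsPoisson k (conjOp e mul) (conjOp e br) := by
  have hb : ∀ m : A → A → A, IsBilin k m → IsBilin k (conjOp e m) := by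
    intro m hm
    refine ⟨?_, ?_, ?_, ?_⟩ <;> intros
    · simp [conjOp, hm.1]
    · simp [conjOp, hm.2.1]
    · simp [conjOp, hm.2.2.1]
    · simp [conjOp, hm.2.2.2]
  refine ⟨hb _ h.mul_bilin, hb _ h.br_bilin, ?_, ?_, ?_, ?_⟩
  · intros; simp [conjOp, h.mul_assoc]
  · intros; simp [conjOp, h.br_alt]
  · intros; simp [conjOp, ← map_add, h.jacobi]
  · intros; simp [conjOp, ← map_add, h.leibniz]

variable {P V : Type u} [AddCommGroup P] [Module k P] [AddCommGroup V] [Module k V]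

/-- Antisymmetry of the bracket of a crossed system, restricted to `V`. -/
lemma IsCrossedSystem.brV_swap {mulP brP : P → P → P} {Om : PreCrossedDatum k P V}
    (h : IsCrossedSystem mulP brP Om) (x y : V) : Om.brV x y = - Om.brV y x := by
  have := congrArg Prod.snd (IsPoisson.br_swap h ((0 : P), x) (0, y))
  simpa [sharpBr, Om.cf_bilin.zero_left_s3, Om.lact_bilin.zero_left_s3] using this

/-- The shear automorphism `(p, x) ↦ (p, r p + x)` of `P × V`. -/
def shear (r : P →ₗ[k] V) : (P × V) ≃ₗ[k] (P × V) where
  toFun a := (a.1, r a.1 + a.2)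
  invFun a := (a.1, a.2 - r a.1)
  map_add' a b := by ext <;> simp; abel
  map_smul' c a := by ext <;> simp
  left_inv a := by ext <;> simp
  right_inv a := by ext <;> simp

/-- `ψ` is an isomorphism `P ♯ V → P ♯' V` of crossed products which stabilizes `V` and
co-stabilizes `P`. -/
def IsExtIso (mulP brP : P → P → P) (Om Om' : PreCrossedDatum k P V)
    (ψ : (P × V) ≃ₗ[k] (P × V)) : Prop :=
  (∀ a b, ψ (sharpMul mulP Om a b) = sharpMul mulP Om' (ψ a) (ψ b)) ∧
  (∀ a b, ψ (sharpBr brP Om a b) = sharpBr brP Om' (ψ a) (ψ b)) ∧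
  (∀ v : V, ψ (0, v) = (0, v)) ∧ (∀ a, (ψ a).1 = a.1)

lemma isExtIso_shear {mulP brP : P → P → P} {Om Om' : PreCrossedDatum k P V}
    (h : IsCrossedSystem mulP brP Om) (hmul : Om.mulV = Om'.mulV) (hbr : Om.brV = Om'.brV)
    {r : P →ₗ[k] V}
    (h1 : ∀ (p : P) (x : V), Om.hl p x = Om'.hl p x + Om.mulV (r p) x)
    (h2 : ∀ (p : P) (x : V), Om.hr x p = Om'.hr x p + Om.mulV x (r p))
    (h3 : ∀ p q, Om.theta p q = Om'.theta p q + Om'.hl p (r q) + Om'.hr (r p) q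
        - r (mulP p q) + Om.mulV (r p) (r q))
    (h4 : ∀ (p : P) (x : V), Om.lact p x = Om'.lact p x + Om.brV (r p) x)
    (h5 : ∀ p q, Om.cf p q = Om'.cf p q + Om'.lact p (r q) - Om'.lact q (r p)
        + Om.brV (r p) (r q) - r (brP p q)) :
    IsExtIso mulP brP Om Om' (shear r) := by
  refine ⟨?_, ?_, ?_, ?_⟩
  · rintro ⟨p, x⟩ ⟨q, y⟩
    refine Prod.ext rfl ?_
    simp only [shear, sharpMul, LinearEquiv.coe_mk, LinearMap.coe_mk, AddHom.coe_mk]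
    rw [h1, h2, h3, Om'.hl_bilin.2.2.1, Om'.hr_bilin.1, Om'.mulV_bilin.1,
      Om'.mulV_bilin.2.2.1, Om'.mulV_bilin.2.2.1, hmul]
    abel
  · rintro ⟨p, x⟩ ⟨q, y⟩
    refine Prod.ext rfl ?_
    simp only [shear, sharpBr, LinearEquiv.coe_mk, LinearMap.coe_mk, AddHom.coe_mk]
    rw [h4, h4, h5, h.brV_swap (r q) x, Om'.lact_bilin.2.2.1, Om'.lact_bilin.2.2.1,
      Om'.brV_bilin.1, Om'.brV_bilin.2.2.1, Om'.brV_bilin.2.2.1, hbr]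
    abel
  · intro v; simp [shear]
  · intro a; simp [shear]

lemma IsExtIso.cohomologous {mulP brP : P → P → P} (hP : IsPoisson k mulP brP)
    {Om Om' : PreCrossedDatum k P V} {ψ : (P × V) ≃ₗ[k] (P × V)}
    (hψ : IsExtIso mulP brP Om Om' ψ) : Cohomologous mulP brP Om Om' := by
  obtain ⟨hm, hb, hv, hp⟩ := hψ
  let r : P →ₗ[k] V := LinearMap.snd k P V ∘ₗ ψ.toLinearMap ∘ₗ LinearMap.inl k P V
  have hr : ∀ a, ψ a = (a.1, r a.1 + a.2) := by
    intro a
    refine Prod.ext (hp a) ?_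
    have h1 : a = (a.1, 0) + (0, a.2) := by simp
    conv_lhs => rw [h1, map_add, hv]
    simp [r]
  -- Evaluating the two morphism identities on pure elements isolates each component.
  have hm' := fun a b => congrArg Prod.snd (hm a b)
  have hb' := fun a b => congrArg Prod.snd (hb a b)
  simp only [hr, sharpMul, sharpBr] at hm' hb'
  have hmulV : Om.mulV = Om'.mulV := by
    funext x y
    simpa [hP.mul_bilin.zero_left_s3, Om.theta_bilin.zero_left_s3, Om.hl_bilin.zero_left_s3,
      Om.hr_bilin.zero_right_s3, Om'.theta_bilin.zero_left_s3, Om'.hl_bilin.zero_left_s3,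
      Om'.hr_bilin.zero_right_s3] using hm' (0, x) (0, y)
  have hbrV : Om.brV = Om'.brV := by
    funext x y
    simpa [hP.br_bilin.zero_left_s3, Om.cf_bilin.zero_left_s3, Om.lact_bilin.zero_left_s3,
      Om'.cf_bilin.zero_left_s3, Om'.lact_bilin.zero_left_s3] using hb' (0, x) (0, y)
  refine ⟨hmulV, hbrV, r, ?_, ?_, ?_, ?_, ?_⟩
  · intro p x
    simpa [hmulV, hP.mul_bilin.zero_right_s3, Om.theta_bilin.zero_right_s3, Om.hr_bilin.zero_right_s3,
      Om'.mulV_bilin.zero_left_s3, Om'.theta_bilin.zero_right_s3,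
      Om'.hr_bilin.zero_right_s3] using hm' (p, 0) (0, x)
  · intro p x
    simpa [hmulV, hP.mul_bilin.zero_left_s3, Om.theta_bilin.zero_left_s3, Om.hl_bilin.zero_left_s3,
      Om'.mulV_bilin.zero_right_s3, Om'.theta_bilin.zero_left_s3,
      Om'.hl_bilin.zero_left_s3] using hm' (0, x) (p, 0)
  · intro p q
    have := hm' (p, 0) (q, 0)
    simp only [Om.hl_bilin.zero_right_s3, Om.hr_bilin.zero_left_s3, Om.mulV_bilin.zero_left_s3,
      add_zero] at this
    rw [hmulV, ← sub_eq_zero]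
    rw [← sub_eq_zero] at this
    rw [← this]
    abel
  · intro p x
    simpa [hbrV, hP.br_bilin.zero_right_s3, Om.cf_bilin.zero_right_s3, Om.lact_bilin.zero_left_s3,
      Om'.brV_bilin.zero_left_s3, Om'.cf_bilin.zero_right_s3,
      Om'.lact_bilin.zero_left_s3] using hb' (p, 0) (0, x)
  · intro p q
    have := hb' (p, 0) (q, 0)
    simp only [Om.lact_bilin.zero_right_s3, Om.brV_bilin.zero_left_s3, add_zero, sub_zero] at this
    rw [hbrV, ← sub_eq_zero]
    rw [← sub_eq_zero] at this
    rw [← this]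
    abel

/-- Cohomologous crossed systems are those with isomorphic crossed products, as extensions. -/
lemma cohomologous_iff {mulP brP : P → P → P} (hP : IsPoisson k mulP brP)
    {Om Om' : PreCrossedDatum k P V} (h : IsCrossedSystem mulP brP Om) :
    Cohomologous mulP brP Om Om' ↔ ∃ ψ, IsExtIso mulP brP Om Om' ψ :=
  ⟨fun ⟨hm, hb, r, h1, h2, h3, h4, h5⟩ =>
    ⟨shear r, isExtIso_shear h hm hb h1 h2 h3 h4 h5⟩, fun ⟨_, hψ⟩ => hψ.cohomologous hP⟩

lemma IsBilin.comp_snd {A B : Type u} [AddCommGroup A] [Module k A] [AddCommGroup B] [Module k B]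
    {m : P × V → P × V → P × V} (hm : IsBilin k m) (i : A →ₗ[k] P × V) (j : B →ₗ[k] P × V) :
    IsBilin k (fun a b => (m (i a) (j b)).2) := by
  refine ⟨?_, ?_, ?_, ?_⟩ <;> intros
  · simp [hm.1]
  · simp [hm.2.1]
  · simp [hm.2.2.1]
  · simp [hm.2.2.2]

/-- A Poisson structure on `P × V` for which the first projection is a morphism is a crossed
product. -/
lemma exists_datum {mulP brP : P → P → P}
    {mul br : P × V → P × V → P × V} (h : IsPoisson k mul br)
    (hm : ∀ a b, (mul a b).1 = mulP a.1 b.1) (hb : ∀ a b, (br a b).1 = brP a.1 b.1) :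
    ∃ Om : PreCrossedDatum k P V, sharpMul mulP Om = mul ∧ sharpBr brP Om = br := by
  let i := LinearMap.inl k P V
  let j := LinearMap.inr k P V
  let Om : PreCrossedDatum k P V :=
    { hl := fun p x => (mul (i p) (j x)).2
      hr := fun x p => (mul (j x) (i p)).2
      theta := fun p q => (mul (i p) (i q)).2
      mulV := fun x y => (mul (j x) (j y)).2
      lact := fun p x => (br (i p) (j x)).2
      cf := fun p q => (br (i p) (i q)).2
      brV := fun x y => (br (j x) (j y)).2
      hl_bilin := h.mul_bilin.comp_snd i j
      hr_bilin := h.mul_bilin.comp_snd j i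
      theta_bilin := h.mul_bilin.comp_snd i i
      mulV_bilin := h.mul_bilin.comp_snd j j
      lact_bilin := h.br_bilin.comp_snd i j
      cf_bilin := h.br_bilin.comp_snd i i
      brV_bilin := h.br_bilin.comp_snd j j }
  have hij : ∀ a : P × V, a = i a.1 + j a.2 := by intro a; simp [i, j]
  refine ⟨Om, ?_, ?_⟩
  · funext a b
    refine Prod.ext (hm a b).symm ?_
    conv_rhs => rw [hij a, hij b]
    rw [h.mul_bilin.1, h.mul_bilin.2.2.1, h.mul_bilin.2.2.1]
    simp only [sharpMul, Om, Prod.snd_add]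
    abel
  · funext a b
    refine Prod.ext (hb a b).symm ?_
    conv_rhs => rw [hij a, hij b]
    rw [h.br_bilin.1, h.br_bilin.2.2.1, h.br_bilin.2.2.1, h.br_swap (j a.2) (i b.1)]
    simp only [sharpBr, Om, Prod.snd_add, Prod.snd_neg]
    abel

lemma cohomologous_equivalence {mulP brP : P → P → P} (hP : IsPoisson k mulP brP) :
    Equivalence (fun Om Om' : {Om : PreCrossedDatum k P V // IsCrossedSystem mulP brP Om} =>
      Cohomologous mulP brP Om.1 Om'.1) := by
  refine ⟨?_, ?_, ?_⟩
  · intro a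
    exact (cohomologous_iff hP a.2).2 ⟨LinearEquiv.refl k _, by simp [IsExtIso]⟩
  · intro a b hab
    obtain ⟨ψ, hm, hb, hv, hp⟩ := (cohomologous_iff hP a.2).1 hab
    refine (cohomologous_iff hP b.2).2 ⟨ψ.symm, ?_, ?_, ?_, ?_⟩
    · intro x y; rw [LinearEquiv.symm_apply_eq, hm]; simp
    · intro x y; rw [LinearEquiv.symm_apply_eq, hb]; simp
    · intro v; rw [LinearEquiv.symm_apply_eq, hv]
    · intro x; rw [← hp (ψ.symm x)]; simp
  · intro a b c hab hbc
    obtain ⟨ψ, hm, hb, hv, hp⟩ := (cohomologous_iff hP a.2).1 hab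
    obtain ⟨χ, hm', hb', hv', hp'⟩ := (cohomologous_iff hP b.2).1 hbc
    refine (cohomologous_iff hP a.2).2 ⟨ψ.trans χ, ?_, ?_, ?_, ?_⟩
    · intro x y; simp [hm, hm']
    · intro x y; simp [hb, hb']
    · intro v; simp [hv, hv']
    · intro x; simp [hp, hp']

variable {E : Type u} [AddCommGroup E] [Module k E]

/-- The splitting `P × ker π ≃ E`, `(p, x) ↦ σ p + x`, given by a linear section `σ` of `π`. -/
def splitEquiv (π : E →ₗ[k] P) (σ : P →ₗ[k] E) (hσ : ∀ p, π (σ p) = p) :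
    (P × ↥(LinearMap.ker π)) ≃ₗ[k] E where
  toFun a := σ a.1 + a.2
  invFun e := (π e, ⟨e - σ (π e), by simp [hσ]⟩)
  map_add' a b := by simp; abel
  map_smul' c a := by simp
  left_inv a := by ext <;> simp [hσ]
  right_inv e := by simp

/-- Poisson structures on `E` for which `π` is a morphism of Poisson algebras. -/
abbrev ExtStruct (mulP brP : P → P → P) (π : E →ₗ[k] P) : Type u :=
  {s : (E → E → E) × (E → E → E) //
    IsPoisson k s.1 s.2 ∧ (∀ a b, π (s.1 a b) = mulP (π a) (π b)) ∧
      (∀ a b, π (s.2 a b) = brP (π a) (π b))}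

/-- Isomorphism of extensions: a Poisson isomorphism stabilizing `ker π` and co-stabilizing
`P`. -/
abbrev ExtRel (mulP brP : P → P → P) (π : E →ₗ[k] P) (s t : ExtStruct mulP brP π) : Prop :=
  ∃ φ : E ≃ₗ[k] E,
    (∀ a b, φ (s.1.1 a b) = t.1.1 (φ a) (φ b)) ∧
    (∀ a b, φ (s.1.2 a b) = t.1.2 (φ a) (φ b)) ∧
    (∀ v ∈ LinearMap.ker π, φ v = v) ∧
    (∀ a, π (φ a) = π a)

lemma extRel_equivalence (mulP brP : P → P → P) (π : E →ₗ[k] P) :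
    Equivalence (ExtRel mulP brP π) := by
  refine ⟨?_, ?_, ?_⟩
  · intro s
    exact ⟨LinearEquiv.refl k _, by simp⟩
  · rintro s t ⟨φ, hm, hb, hv, hp⟩
    refine ⟨φ.symm, ?_, ?_, ?_, ?_⟩
    · intro x y; rw [LinearEquiv.symm_apply_eq, hm]; simp
    · intro x y; rw [LinearEquiv.symm_apply_eq, hb]; simp
    · intro v h; rw [LinearEquiv.symm_apply_eq, hv v h]
    · intro x; rw [← hp (φ.symm x)]; simp
  · rintro s t w ⟨φ, hm, hb, hv, hp⟩ ⟨χ, hm', hb', hv', hp'⟩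
    refine ⟨φ.trans χ, ?_, ?_, ?_, ?_⟩
    · intro x y; simp [hm, hm']
    · intro x y; simp [hb, hb']
    · intro v h; simp [hv v h, hv' v h]
    · intro x; simp [hp, hp']

end Helpers

/-- **Theorem 2.9.**  Let `P` be a Poisson algebra, `E` a vector space, `π : E → P` a
surjective linear map with `V = ker π`.  Being cohomologous is an equivalence relation on
the set of crossed systems of `P` by `V`, and `Ω ↦ P ♯_Ω V` induces a bijection
`GPH²(P,V) = PS(P,V)/≈ → Gext(E,P)`. -/
theorem statement3 {k P E : Type u} [Field k] [AddCommGroup P] [Module k P]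
    [AddCommGroup E] [Module k E] (mulP brP : P → P → P) (hP : IsPoisson k mulP brP)
    (π : E →ₗ[k] P) (hπ : Function.Surjective π) :
    Equivalence (fun Om Om' : {Om : PreCrossedDatum k P ↥(LinearMap.ker π) //
        IsCrossedSystem mulP brP Om} => Cohomologous mulP brP Om.1 Om'.1) ∧
    ∃ F : Quot (fun Om Om' : {Om : PreCrossedDatum k P ↥(LinearMap.ker π) //
            IsCrossedSystem mulP brP Om} => Cohomologous mulP brP Om.1 Om'.1) ≃
          Quot (fun s t : {s : (E → E → E) × (E → E → E) //
              IsPoisson k s.1 s.2 ∧ (∀ a b, π (s.1 a b) = mulP (π a) (π b)) ∧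
              (∀ a b, π (s.2 a b) = brP (π a) (π b))} =>
            ∃ φ : E ≃ₗ[k] E,
              (∀ a b, φ (s.1.1 a b) = t.1.1 (φ a) (φ b)) ∧
              (∀ a b, φ (s.1.2 a b) = t.1.2 (φ a) (φ b)) ∧
              (∀ v ∈ LinearMap.ker π, φ v = v) ∧
              (∀ a, π (φ a) = π a)),
      ∀ (Om : {Om : PreCrossedDatum k P ↥(LinearMap.ker π) // IsCrossedSystem mulP brP Om})
        (s : {s : (E → E → E) × (E → E → E) //
              IsPoisson k s.1 s.2 ∧ (∀ a b, π (s.1 a b) = mulP (π a) (π b)) ∧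
              (∀ a b, π (s.2 a b) = brP (π a) (π b))}),
        F (Quot.mk _ Om) = Quot.mk _ s →
        ∃ φ : (P × ↥(LinearMap.ker π)) ≃ₗ[k] E,
          (∀ a b, φ (sharpMul mulP Om.1 a b) = s.1.1 (φ a) (φ b)) ∧
          (∀ a b, φ (sharpBr brP Om.1 a b) = s.1.2 (φ a) (φ b)) ∧
          (∀ v : ↥(LinearMap.ker π), φ (0, v) = (v : E)) ∧
          (∀ a, π (φ a) = a.1) := by
  refine ⟨cohomologous_equivalence hP, ?_⟩
  obtain ⟨σ, hσ'⟩ := π.exists_rightInverse_of_surjective (LinearMap.range_eq_top.2 hπ)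
  have hσ : ∀ p, π (σ p) = p := fun p => LinearMap.congr_fun hσ' p
  let e := splitEquiv π σ hσ
  have he : ∀ a, π (e a) = a.1 := by intro a; simp [e, splitEquiv, hσ]
  have hs : ∀ a, (e.symm a).1 = π a := fun a => rfl
  have hv : ∀ v : ↥(LinearMap.ker π), e (0, v) = (v : E) := by intro v; simp [e, splitEquiv]
  let T : {Om : PreCrossedDatum k P ↥(LinearMap.ker π) // IsCrossedSystem mulP brP Om} →
      ExtStruct mulP brP π := fun Om =>
    ⟨(conjOp e (sharpMul mulP Om.1), conjOp e (sharpBr brP Om.1)), IsPoisson.conj e Om.2,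
      fun a b => by simp [conjOp, he, sharpMul, hs], fun a b => by simp [conjOp, he, sharpBr, hs]⟩
  have hT : ∀ Om Om', Cohomologous mulP brP Om.1 Om'.1 ↔
      ExtRel mulP brP π (T Om) (T Om') := by
    intro Om Om'
    rw [cohomologous_iff hP Om.2]
    constructor
    · rintro ⟨ψ, hm, hb, hv', hp⟩
      refine ⟨(e.symm.trans ψ).trans e, ?_, ?_, ?_, ?_⟩
      · intro a b; simp [T, conjOp, hm]
      · intro a b; simp [T, conjOp, hb]
      · intro v h
        have : e.symm v = (0, ⟨v, h⟩) := by rw [LinearEquiv.symm_apply_eq, hv]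
        simp [this, hv', hv]
      · intro a; simp [he, hp, hs]
    · rintro ⟨φ, hm, hb, hv', hp⟩
      refine ⟨(e.trans φ).trans e.symm, ?_, ?_, ?_, ?_⟩
      · intro a b
        have := hm (e a) (e b)
        simp only [T, conjOp, LinearEquiv.symm_apply_apply] at this
        simp [this]
      · intro a b
        have := hb (e a) (e b)
        simp only [T, conjOp, LinearEquiv.symm_apply_apply] at this
        simp [this]
      · intro v
        simp only [LinearEquiv.trans_apply]
        rw [LinearEquiv.symm_apply_eq, hv, hv' _ v.2]
      · intro a; simp [hs, hp, he]
  have hTsurj : Function.Surjective T := by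
    rintro ⟨⟨mul, br⟩, hpois, hm, hb⟩
    obtain ⟨Om, h1, h2⟩ := exists_datum (mulP := mulP) (brP := brP) (IsPoisson.conj e.symm hpois)
      (fun a b => by simp [conjOp, hs, hm, he]) (fun a b => by simp [conjOp, hs, hb, he])
    refine ⟨⟨Om, ?_⟩, ?_⟩
    · unfold IsCrossedSystem
      rw [h1, h2]
      exact IsPoisson.conj e.symm hpois
    · refine Subtype.ext (Prod.ext ?_ ?_)
      · funext a b; simp [T, h1, conjOp]
      · funext a b; simp [T, h2, conjOp]
  have hexact : ∀ {s t : ExtStruct mulP brP π},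
      Quot.mk (ExtRel mulP brP π) s = Quot.mk _ t → ExtRel mulP brP π s t := fun h =>
    (extRel_equivalence mulP brP π).eqvGen_iff.1 (Quot.eqvGen_exact h)
  refine ⟨Equiv.ofBijective (Quot.map T fun Om Om' h => (hT Om Om').1 h) ⟨?_, ?_⟩, ?_⟩
  · rintro ⟨Om⟩ ⟨Om'⟩ h
    exact Quot.sound ((hT Om Om').2 (hexact h))
  · rintro ⟨s⟩
    obtain ⟨Om, rfl⟩ := hTsurj s
    exact ⟨Quot.mk _ Om, rfl⟩
  · intro Om s h
    obtain ⟨φ, hm, hb, hv', hp⟩ : ExtRel mulP brP π (T Om) s := hexact h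
    refine ⟨e.trans φ, ?_, ?_, ?_, ?_⟩
    · intro a b
      have := hm (e a) (e b)
      simpa only [T, conjOp, LinearEquiv.symm_apply_apply, LinearEquiv.trans_apply] using this
    · intro a b
      have := hb (e a) (e b)
      simpa only [T, conjOp, LinearEquiv.symm_apply_apply, LinearEquiv.trans_apply] using this
    · intro v
      simp only [LinearEquiv.trans_apply]
      rw [hv, hv' _ v.2]
    · intro a; simp [hp, he]
end
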